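/- Assume Condition 2 (quasi-spiked covariance structure): λ_k ≥ λ_{k+1} + d and λ_{k+1} − λ_p ≤ ε for some d, ε > 0. Decompose δ = δ_1 + δ_2 with δ_1 ∈ W_1 = span{ξ_1, ..., ξ_k} and δ_2 ∈ W_2 = span{ξ_{k+1}, ..., ξ_p}, and assume δ_2 ≠ 0 (i.e., δ ∉ W_1). Set d̃ = d·ρ||δ_2||_2^2/(d + ρ||δ||_2^2) and assume ε < d̃/2. Then ||U^T β||_1 / ||U^T β||_2 ≤ √(k+1) + √(p−k−1) · ((λ_p + ε)/λ_p) · ( ε/λ_p + √( ε/(d̃ − 2ε) ) ). (Theorem 2, second part) -/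

import Mathlib

open Matrix

/-- The two-dimensional quadratic form bound. -/
lemma quad_aux (d ρ A s t N1 N2 : ℝ) (hd : 0 < d) (hρ : 0 < ρ) (hA : 0 ≤ A) (hN1 : 0 ≤ N1)
    (hN2 : 0 ≤ N2) (hs : s ^ 2 ≤ A * N1) :
    d * ρ * (N2 * A + t ^ 2) ≤ (d + ρ * (N1 + N2)) * (d * A + ρ * (s + t) ^ 2) := by
  have key : 0 ≤ d ^ 2 * A + 2 * d * ρ * s * (s + t) + ρ ^ 2 * N1 * (s + t) ^ 2 := by
    rcases hN1.eq_or_lt with h | h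
    · subst h
      have : s = 0 := by
        have : s ^ 2 = 0 := le_antisymm (by simpa using hs) (sq_nonneg s)
        simpa using this
      subst this
      have := mul_nonneg (sq_nonneg d) hA
      simpa using this
    · have h1 := mul_le_mul_of_nonneg_left hs (sq_nonneg d)
      have h2 := sq_nonneg (d * s + ρ * N1 * (s + t))
      have : 0 ≤ N1 * (d ^ 2 * A + 2 * d * ρ * s * (s + t) + ρ ^ 2 * N1 * (s + t) ^ 2) := by
        nlinarith
      exact nonneg_of_mul_nonneg_right this h
  have h3 : 0 ≤ ρ ^ 2 * N2 * (s + t) ^ 2 := by positivity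
  have h4 := mul_le_mul_of_nonneg_left hs (mul_pos hd hρ).le
  nlinarith

lemma le_of_sq_aux (u v : ℝ) (hv : 0 ≤ v) (h : u ^ 2 ≤ v ^ 2) : u ≤ v :=
  (le_abs_self u).trans (abs_le_of_sq_le_sq h hv)

lemma cs_aux (A B u w g h : ℝ) (hA : 0 ≤ A) (hB : 0 ≤ B) (hu : 0 ≤ u) (hw : 0 ≤ w)
    (hg : g ^ 2 ≤ A * B) (hh : h ^ 2 ≤ u * w) : (g + h) ^ 2 ≤ (A + u) * (B + w) := by
  have h1 : 2 * (g * h) ≤ A * w + u * B := by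
    apply le_of_sq_aux _ _ (by positivity)
    have h2 : g ^ 2 * h ^ 2 ≤ (A * B) * (u * w) :=
      mul_le_mul hg hh (sq_nonneg _) (mul_nonneg hA hB)
    have h3 := sq_nonneg (A * w - u * B)
    calc (2 * (g * h)) ^ 2 = 4 * (g ^ 2 * h ^ 2) := by ring
      _ ≤ 4 * ((A * B) * (u * w)) := by linarith
      _ ≤ (A * w + u * B) ^ 2 := by linarith
  calc (g + h) ^ 2 = g ^ 2 + 2 * (g * h) + h ^ 2 := by ring
    _ ≤ A * B + (A * w + u * B) + u * w := by linarith
    _ = _ := by ring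

lemma core_aux {p : ℕ} (T : Finset (Fin p)) (l x D b : Fin p → ℝ) (L d ε ρ dt : ℝ)
    (hL : 0 < L) (hd : 0 < d) (hε : 0 < ε) (hρ : 0 < ρ)
    (htop : ∀ j ∈ T, L + d ≤ l j)
    (hlo : ∀ j, L ≤ l j) (hhi : ∀ j ∈ Tᶜ, l j ≤ L + ε)
    (hb : ∀ j, l j * b j = D j)
    (hN2 : 0 < ∑ j ∈ Tᶜ, D j ^ 2)
    (hdt : dt = d * ρ * (∑ j ∈ Tᶜ, D j ^ 2) / (d + ρ * ∑ j, D j ^ 2))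
    (hx : ∑ j, l j * x j ^ 2 + ρ * (∑ j, D j * x j) ^ 2 ≤ (L + ε) * ∑ j, x j ^ 2) :
    ∑ j, x j * b j ≤ ((L + ε) / L * Real.sqrt (ε / dt) + ε / L) *
      (Real.sqrt (∑ j, x j ^ 2) * Real.sqrt (∑ j, b j ^ 2)) := by
  set N2 := ∑ j ∈ Tᶜ, D j ^ 2 with hN2d
  set N1 := ∑ j ∈ T, D j ^ 2 with hN1d
  set A := ∑ j ∈ T, x j ^ 2 with hAd
  set s := ∑ j ∈ T, x j * D j with hsd
  set t := ∑ j ∈ Tᶜ, x j * D j with htd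
  set X := ∑ j, x j ^ 2 with hXd
  set B := ∑ j, b j ^ 2 with hBd
  have hsplit : ∀ f : Fin p → ℝ, ∑ j, f j = ∑ j ∈ T, f j + ∑ j ∈ Tᶜ, f j := fun f =>
    (Finset.sum_add_sum_compl T f).symm
  have hA0 : 0 ≤ A := Finset.sum_nonneg fun j _ => sq_nonneg _
  have hN10 : 0 ≤ N1 := Finset.sum_nonneg fun j _ => sq_nonneg _
  have hX0 : 0 ≤ X := Finset.sum_nonneg fun j _ => sq_nonneg _
  have hB0 : 0 ≤ B := Finset.sum_nonneg fun j _ => sq_nonneg _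
  have hs : s ^ 2 ≤ A * N1 := Finset.sum_mul_sq_le_sq_mul_sq T x D
  have hND : ∑ j, D j ^ 2 = N1 + N2 := hsplit _
  rw [hND] at hdt
  have hden : 0 < d + ρ * (N1 + N2) := by positivity
  have hdt0 : 0 < dt := by rw [hdt]; positivity
  have hform : d * A + ρ * (s + t) ^ 2 ≤ ε * X := by
    have h1 : d * A ≤ ∑ j, (l j - L) * x j ^ 2 := by
      rw [hsplit, hAd, Finset.mul_sum]
      have h2 : ∑ j ∈ T, d * x j ^ 2 ≤ ∑ j ∈ T, (l j - L) * x j ^ 2 :=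
        Finset.sum_le_sum fun j hj =>
          mul_le_mul_of_nonneg_right (by linarith [htop j hj]) (sq_nonneg _)
      have h3 : 0 ≤ ∑ j ∈ Tᶜ, (l j - L) * x j ^ 2 :=
        Finset.sum_nonneg fun j _ => mul_nonneg (by linarith [hlo j]) (sq_nonneg _)
      linarith
    have h4 : ∑ j, (l j - L) * x j ^ 2 = ∑ j, l j * x j ^ 2 - L * X := by
      rw [hXd, Finset.mul_sum, ← Finset.sum_sub_distrib]
      exact Finset.sum_congr rfl fun j _ => by ring
    have h5 : ∑ j, D j * x j = s + t := by
      rw [hsplit, hsd, htd]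
      simp only [mul_comm]
    rw [h5] at hx
    linarith
  have hq := quad_aux d ρ A s t N1 N2 hd hρ hA0 hN10 hN2.le hs
  have hq2 : A + t ^ 2 / N2 ≤ ε / dt * X := by
    have e1 : A + t ^ 2 / N2 = (d * ρ * (N2 * A + t ^ 2)) / (d * ρ * N2) := by
      field_simp
    have e2 : ε / dt * X = (d + ρ * (N1 + N2)) * (ε * X) / (d * ρ * N2) := by
      rw [hdt]; field_simp
    rw [e1, e2]
    refine div_le_div_of_nonneg_right ?_ (by positivity)
    exact hq.trans (mul_le_mul_of_nonneg_left hform hden.le)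
  -- bound of N2 in terms of b
  set B1 := ∑ j ∈ T, b j ^ 2 with hB1d
  set B2 := ∑ j ∈ Tᶜ, b j ^ 2 with hB2d
  have hB : B = B1 + B2 := hsplit _
  have hB10 : 0 ≤ B1 := Finset.sum_nonneg fun j _ => sq_nonneg _
  have hB20 : 0 ≤ B2 := Finset.sum_nonneg fun j _ => sq_nonneg _
  have hN2B : N2 ≤ (L + ε) ^ 2 * B2 := by
    rw [hN2d, hB2d, Finset.mul_sum]
    refine Finset.sum_le_sum fun j hj => ?_
    rw [← hb j, mul_pow]
    exact mul_le_mul_of_nonneg_right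
      (pow_le_pow_left₀ (hL.le.trans (hlo j)) (hhi j hj) 2) (sq_nonneg _)
  have hR : ∑ j ∈ Tᶜ, (b j - D j / L) ^ 2 ≤ (ε / L) ^ 2 * B := by
    have : ∑ j ∈ Tᶜ, (b j - D j / L) ^ 2 ≤ (ε / L) ^ 2 * B2 := by
      rw [hB2d, Finset.mul_sum]
      refine Finset.sum_le_sum fun j hj => ?_
      have : b j - D j / L = -((l j - L) / L * b j) := by
        rw [← hb j]; field_simp; ring
      rw [this, neg_sq, mul_pow]
      refine mul_le_mul_of_nonneg_right ?_ (sq_nonneg _)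
      have h0 : 0 ≤ l j - L := by linarith [hlo j]
      refine pow_le_pow_left₀ (div_nonneg h0 hL.le) ?_ 2
      exact div_le_div_of_nonneg_right (by linarith [hhi j hj]) hL.le
    refine this.trans (mul_le_mul_of_nonneg_left (by linarith) (sq_nonneg _))
  have hdecomp : ∑ j, x j * b j = (∑ j ∈ T, x j * b j + t / L) +
      ∑ j ∈ Tᶜ, x j * (b j - D j / L) := by
    rw [hsplit, add_assoc]
    congr 1
    rw [htd, Finset.sum_div, ← Finset.sum_add_distrib]
    exact Finset.sum_congr rfl fun j _ => by ring
  have hpart2 : ∑ j ∈ Tᶜ, x j * (b j - D j / L) ≤ ε / L * (Real.sqrt X * Real.sqrt B) := by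
    refine (Real.sum_mul_le_sqrt_mul_sqrt Tᶜ x _).trans ?_
    have h1 : Real.sqrt (∑ j ∈ Tᶜ, x j ^ 2) ≤ Real.sqrt X :=
      Real.sqrt_le_sqrt (by rw [hXd, hsplit]; linarith)
    have h2 : Real.sqrt (∑ j ∈ Tᶜ, (b j - D j / L) ^ 2) ≤ ε / L * Real.sqrt B := by
      refine (Real.sqrt_le_sqrt hR).trans ?_
      rw [Real.sqrt_mul (sq_nonneg _), Real.sqrt_sq (by positivity)]
    calc _ ≤ Real.sqrt X * (ε / L * Real.sqrt B) :=
          mul_le_mul h1 h2 (Real.sqrt_nonneg _) (Real.sqrt_nonneg _)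
      _ = _ := by ring
  have hpart1 : ∑ j ∈ T, x j * b j + t / L ≤
      (L + ε) / L * Real.sqrt (ε / dt) * (Real.sqrt X * Real.sqrt B) := by
    have hr : ∀ u v : ℝ, 0 ≤ v → u ^ 2 ≤ v ^ 2 → u ≤ v := fun u v hv h => le_of_sq_aux u v hv h
    apply hr
    · positivity
    · have c1 : (∑ j ∈ T, x j * b j) ^ 2 ≤ A * B1 := Finset.sum_mul_sq_le_sq_mul_sq T x b
      have c2 : (∑ j ∈ T, x j * b j + t / L) ^ 2 ≤ (A + t ^ 2 / N2) * (B1 + N2 / L ^ 2) := by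
        refine cs_aux A B1 (t ^ 2 / N2) (N2 / L ^ 2) _ _ hA0 hB10 (by positivity) (by positivity)
          c1 (le_of_eq ?_)
        field_simp
      refine c2.trans ?_
      have c3 : B1 + N2 / L ^ 2 ≤ ((L + ε) / L) ^ 2 * B := by
        have h1 : N2 / L ^ 2 ≤ ((L + ε) / L) ^ 2 * B2 := by
          rw [div_pow, div_mul_eq_mul_div]
          gcongr
        have h2 : 1 ≤ ((L + ε) / L) ^ 2 := by
          apply one_le_pow₀
          rw [one_le_div hL]; linarith
        have h3 := mul_le_mul_of_nonneg_right h2 hB10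
        rw [hB, mul_add]
        linarith
      have e3 : ((L + ε) / L * Real.sqrt (ε / dt) * (Real.sqrt X * Real.sqrt B)) ^ 2 =
          (ε / dt * X) * (((L + ε) / L) ^ 2 * B) := by
        rw [mul_pow, mul_pow, mul_pow, Real.sq_sqrt hX0, Real.sq_sqrt hB0,
          Real.sq_sqrt (by positivity)]
        ring
      rw [e3]
      exact mul_le_mul hq2 c3 (by positivity) (by positivity)
  rw [hdecomp, add_mul]
  exact add_le_add hpart1 hpart2

/-- Parseval for an orthogonal matrix. -/
lemma parseval_aux {p : ℕ} (M : Matrix (Fin p) (Fin p) ℝ) (hM : Mᵀ * M = 1)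
    (v w : Fin p → ℝ) : (M *ᵥ v) ⬝ᵥ (M *ᵥ w) = v ⬝ᵥ w := by
  rw [Matrix.dotProduct_mulVec, Matrix.vecMul_mulVec, ← Matrix.dotProduct_mulVec, hM,
    Matrix.one_mulVec]

lemma dot_self_aux {p : ℕ} (v : Fin p → ℝ) : v ⬝ᵥ v = ∑ i, v i ^ 2 := by
  simp [dotProduct, sq]

/-- Half of the interlacing: `η_i ≤ λ_k` for `i > k`. -/
lemma interlace_aux {p k : ℕ} (hkp : k < p) (lam : Fin p → ℝ)
    (hdesc : ∀ i j : Fin p, i ≤ j → lam j ≤ lam i)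
    (C U R : Matrix (Fin p) (Fin p) ℝ) (hC : Cᵀ * C = 1) (hU : Uᵀ * U = 1)
    (δ : Fin p → ℝ) (ρ : ℝ) (η : Fin p → ℝ) (hηdesc : ∀ i j : Fin p, i ≤ j → η j ≤ η i)
    (hRU : ∀ z, (U *ᵥ z) ⬝ᵥ (R *ᵥ (U *ᵥ z)) = ∑ j, η j * z j ^ 2)
    (hRC : ∀ v, v ⬝ᵥ (R *ᵥ v) = ∑ j, lam j * (C *ᵥ v) j ^ 2 + ρ * (δ ⬝ᵥ v) ^ 2)
    (i : Fin p) (hi : k < i.1) : η i ≤ lam ⟨k, hkp⟩ := by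
  let f : (Fin p → ℝ) →ₗ[ℝ] (({j : Fin p // j.1 < k} → ℝ) × ({j : Fin p // i < j} → ℝ) × ℝ) :=
    { toFun := fun z => (fun j => (C *ᵥ (U *ᵥ z)) j.1, fun j => z j.1, δ ⬝ᵥ (U *ᵥ z))
      map_add' := by
        intro a b
        simp only [Matrix.mulVec_add, dotProduct_add, Prod.mk_add_mk]
        rfl
      map_smul' := by
        intro c b
        simp only [Matrix.mulVec_smul, dotProduct_smul, RingHom.id_apply, Prod.smul_mk]
        rfl }
  have hcard1 : Fintype.card {j : Fin p // j.1 < k} = k := by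
    rw [Fintype.card_subtype]
    have : (Finset.univ.filter fun j : Fin p => j.1 < k) = Finset.Iio ⟨k, hkp⟩ := by
      ext j; simp [Fin.lt_def]
    rw [this, Fin.card_Iio]
  have hcard2 : Fintype.card {j : Fin p // i < j} = p - 1 - i.1 := by
    rw [Fintype.card_subtype]
    have : (Finset.univ.filter fun j : Fin p => i < j) = Finset.Ioi i := by
      ext j; simp
    rw [this, Fin.card_Ioi]
  have hker : LinearMap.ker f ≠ ⊥ := by
    apply LinearMap.ker_ne_bot_of_finrank_lt
    rw [Module.finrank_prod, Module.finrank_prod, Module.finrank_fintype_fun_eq_card,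
      Module.finrank_fintype_fun_eq_card, Module.finrank_fintype_fun_eq_card,
      Module.finrank_self, hcard1, hcard2, Fintype.card_fin]
    have := i.2
    omega
  obtain ⟨z, hz, hz0⟩ := Submodule.exists_mem_ne_zero_of_ne_bot hker
  have hz' : f z = 0 := hz
  have h1 : ∀ j : Fin p, j.1 < k → (C *ᵥ (U *ᵥ z)) j = 0 := fun j hj =>
    congrFun (congrArg Prod.fst hz') ⟨j, hj⟩
  have h2 : ∀ j : Fin p, i < j → z j = 0 := fun j hj =>
    congrFun (congrArg (fun q => q.2.1) hz') ⟨j, hj⟩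
  have h3 : δ ⬝ᵥ (U *ᵥ z) = 0 := congrArg (fun q => q.2.2) hz'
  have hpos : 0 < ∑ j, z j ^ 2 := by
    have : 0 ≤ ∑ j, z j ^ 2 := Finset.sum_nonneg fun j _ => sq_nonneg _
    refine lt_of_le_of_ne this fun h => hz0 ?_
    rw [← dot_self_aux] at h
    exact dotProduct_self_eq_zero.1 h.symm
  have hnorm : ∑ j, (C *ᵥ (U *ᵥ z)) j ^ 2 = ∑ j, z j ^ 2 := by
    rw [← dot_self_aux, parseval_aux C hC, parseval_aux U hU, dot_self_aux]
  have hlow : η i * ∑ j, z j ^ 2 ≤ ∑ j, η j * z j ^ 2 := by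
    rw [Finset.mul_sum]
    refine Finset.sum_le_sum fun j _ => ?_
    rcases le_or_gt j i with h | h
    · exact mul_le_mul_of_nonneg_right (hηdesc _ _ h) (sq_nonneg _)
    · simp [h2 j h]
  have hup : ∑ j, η j * z j ^ 2 ≤ lam ⟨k, hkp⟩ * ∑ j, z j ^ 2 := by
    rw [← hRU, hRC, h3, ← hnorm, Finset.mul_sum]
    simp only [ne_eq, OfNat.ofNat_ne_zero, not_false_eq_true, zero_pow, mul_zero, add_zero]
    refine Finset.sum_le_sum fun j _ => ?_
    rcases lt_or_ge j.1 k with h | h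
    · simp [h1 j h]
    · exact mul_le_mul_of_nonneg_right (hdesc ⟨k, hkp⟩ j h) (sq_nonneg _)
  exact le_of_mul_le_mul_right (hlow.trans hup) hpos

/-- Theorem 2 (second part): under the quasi-spiked covariance structure
(Condition 2), with `δ = δ₁ + δ₂`, `δ₂ ≠ 0`, and `ε < d̃/2`, the ℓ1/ℓ2 ratio of
`Uᵀβ` is bounded by `√(k+1) + √(p−k−1)·((λ_p+ε)/λ_p)·(ε/λ_p + √(ε/(d̃−2ε)))`. -/
theorem rotation_l1_l2_ratio_quasi_spiked
    {p k : ℕ} (hk : 1 ≤ k) (hkp : k < p)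
    (S : Matrix (Fin p) (Fin p) ℝ) (hS : S.IsSymm)
    (lam : Fin p → ℝ) (xi : Fin p → (Fin p → ℝ))
    (hpos : ∀ j, 0 < lam j)
    (hdesc : ∀ i j : Fin p, i ≤ j → lam j ≤ lam i)
    (horth : ∀ i j : Fin p, xi i ⬝ᵥ xi j = if i = j then (1 : ℝ) else 0)
    (heig : ∀ j, S.mulVec (xi j) = lam j • xi j)
    (δ : Fin p → ℝ) (ρ : ℝ) (hρ : 0 < ρ)
    (U : Matrix (Fin p) (Fin p) ℝ) (hU : Uᵀ * U = 1)
    (η : Fin p → ℝ) (hηdesc : ∀ i j : Fin p, i ≤ j → η j ≤ η i)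
    (hdiag : Uᵀ * (S + ρ • vecMulVec δ δ) * U = Matrix.diagonal η)
    -- Condition 2 (quasi-spiked covariance structure)
    (d ε : ℝ) (hd : 0 < d) (hε : 0 < ε)
    (hgap : lam ⟨k, hkp⟩ + d ≤ lam ⟨k - 1, by omega⟩)
    (hquasi : lam ⟨k, hkp⟩ - lam ⟨p - 1, by omega⟩ ≤ ε)
    -- decomposition δ = δ₁ + δ₂ with δ₁ ∈ W₁, δ₂ ∈ W₂, δ₂ ≠ 0
    (δ1 δ2 : Fin p → ℝ) (hdec : δ = δ1 + δ2)
    (hδ1 : δ1 ∈ Submodule.span ℝ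
      (Set.range fun i : Fin k => xi ⟨i.1, lt_trans i.isLt hkp⟩))
    (hδ2 : δ2 ∈ Submodule.span ℝ
      (Set.range fun i : Fin (p - k) => xi ⟨k + i.1, by omega⟩))
    (hδ2ne : δ2 ≠ 0)
    -- d̃ and the smallness condition on ε
    (dt : ℝ)
    (hdt : dt = d * ρ * (∑ i, δ2 i ^ 2) / (d + ρ * ∑ i, δ i ^ 2))
    (hεdt : ε < dt / 2) :
    (∑ i, |(Uᵀ).mulVec (S⁻¹.mulVec δ) i|) /
        Real.sqrt (∑ i, ((Uᵀ).mulVec (S⁻¹.mulVec δ) i) ^ 2) ≤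
      Real.sqrt (k + 1) +
        Real.sqrt ((p - k - 1 : ℕ)) *
          ((lam ⟨p - 1, by omega⟩ + ε) / lam ⟨p - 1, by omega⟩) *
          (ε / lam ⟨p - 1, by omega⟩ + Real.sqrt (ε / (dt - 2 * ε))) := by
  set L := lam ⟨p - 1, by omega⟩ with hLd
  have hL : 0 < L := hpos _
  -- coordinates with respect to the basis `xi`
  let C : Matrix (Fin p) (Fin p) ℝ := Matrix.of xi
  have hCv : ∀ v j, (C *ᵥ v) j = xi j ⬝ᵥ v := fun v j => rfl
  have hCC' : C * Cᵀ = 1 := by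
    ext i j
    rw [Matrix.mul_apply, Matrix.one_apply, ← horth i j]
    rfl
  have hC : Cᵀ * C = 1 := mul_eq_one_comm.1 hCC'
  have hUU : U * Uᵀ = 1 := mul_eq_one_comm.1 hU
  have hCS : ∀ v j, (C *ᵥ (S *ᵥ v)) j = lam j * (C *ᵥ v) j := by
    intro v j
    rw [hCv, hCv, Matrix.dotProduct_mulVec, ← Matrix.mulVec_transpose, hS.eq, heig,
      smul_dotProduct, smul_eq_mul]
  have hCinj : ∀ v : Fin p → ℝ, C *ᵥ v = 0 → v = 0 := by
    intro v hv
    have : Cᵀ *ᵥ (C *ᵥ v) = v := by rw [Matrix.mulVec_mulVec, hC, Matrix.one_mulVec]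
    rw [← this, hv, Matrix.mulVec_zero]
  have hdet : IsUnit S.det := by
    rw [isUnit_iff_ne_zero]
    intro h0
    obtain ⟨v, hv0, hv⟩ := Matrix.exists_mulVec_eq_zero_iff.2 h0
    apply hv0
    apply hCinj
    ext j
    have := hCS v j
    rw [hv, Matrix.mulVec_zero] at this
    have h2 : lam j * (C *ᵥ v) j = 0 := this.symm
    exact (mul_eq_zero.1 h2).resolve_left (hpos j).ne'
  set β := S⁻¹ *ᵥ δ with hβ
  have hSβ : S *ᵥ β = δ := by
    rw [hβ, Matrix.mulVec_mulVec, Matrix.mul_nonsing_inv _ hdet, Matrix.one_mulVec]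
  set R := S + ρ • vecMulVec δ δ with hR
  have hRC : ∀ v, v ⬝ᵥ (R *ᵥ v) = ∑ j, lam j * (C *ᵥ v) j ^ 2 + ρ * (δ ⬝ᵥ v) ^ 2 := by
    intro v
    rw [hR, Matrix.add_mulVec, dotProduct_add]
    congr 1
    · rw [← parseval_aux C hC]
      simp only [dotProduct]
      refine Finset.sum_congr rfl fun j _ => ?_
      rw [hCS]; ring
    · rw [Matrix.smul_mulVec, Matrix.vecMulVec_mulVec]
      simp only [dotProduct_smul, smul_eq_mul, MulOpposite.smul_eq_mul_unop, MulOpposite.unop_op,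
        dotProduct_comm v δ]
      ring
  have hRU : ∀ z, (U *ᵥ z) ⬝ᵥ (R *ᵥ (U *ᵥ z)) = ∑ j, η j * z j ^ 2 := by
    intro z
    have : (U *ᵥ z) ⬝ᵥ (R *ᵥ (U *ᵥ z)) = z ⬝ᵥ ((Uᵀ * R * U) *ᵥ z) := by
      rw [← Matrix.mulVec_mulVec, ← Matrix.mulVec_mulVec, Matrix.dotProduct_mulVec z Uᵀ,
        Matrix.vecMul_transpose]
    rw [this, hdiag]
    simp only [dotProduct, Matrix.mulVec_diagonal]
    exact Finset.sum_congr rfl fun j _ => by ring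
  have hη : ∀ i : Fin p, k < i.1 → η i ≤ L + ε := fun i hi =>
    (interlace_aux hkp lam hdesc C U R hC hU δ ρ η hηdesc hRU hRC i hi).trans (by linarith)
  -- the decomposition of δ in coordinates
  have hc1 : ∀ j : Fin p, k ≤ j.1 → (C *ᵥ δ1) j = 0 := by
    intro j hj
    clear hdec hδ2ne hdt
    induction hδ1 using Submodule.span_induction with
    | mem x hx =>
      obtain ⟨i, rfl⟩ := hx
      rw [hCv, horth, if_neg]
      intro h
      have := i.2
      have := congrArg Fin.val h
      simp at this
      omega
    | zero => simp
    | add x y _ _ hx hy => rw [Matrix.mulVec_add, Pi.add_apply, hx, hy, add_zero]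
    | smul a x _ hx => rw [Matrix.mulVec_smul, Pi.smul_apply, hx, smul_zero]
  have hc2 : ∀ j : Fin p, j.1 < k → (C *ᵥ δ2) j = 0 := by
    intro j hj
    clear hdec hδ2ne hdt
    induction hδ2 using Submodule.span_induction with
    | mem x hx =>
      obtain ⟨i, rfl⟩ := hx
      rw [hCv, horth, if_neg]
      intro h
      have := congrArg Fin.val h
      simp at this
      omega
    | zero => simp
    | add x y _ _ hx hy => rw [Matrix.mulVec_add, Pi.add_apply, hx, hy, add_zero]
    | smul a x _ hx => rw [Matrix.mulVec_smul, Pi.smul_apply, hx, smul_zero]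
  let T : Finset (Fin p) := Finset.univ.filter fun j => j.1 < k
  have hT : ∀ j, j ∈ T ↔ j.1 < k := fun j => by simp [T]
  have hTc : ∀ j, j ∈ Tᶜ ↔ k ≤ j.1 := fun j => by simp [T]
  have hN2 : ∑ j ∈ Tᶜ, (C *ᵥ δ) j ^ 2 = ∑ i, δ2 i ^ 2 := by
    rw [← dot_self_aux δ2, ← parseval_aux C hC, dot_self_aux,
      ← Finset.sum_add_sum_compl T (fun j => (C *ᵥ δ2) j ^ 2)]
    rw [Finset.sum_eq_zero (s := T) fun j hj => by rw [hc2 j ((hT j).1 hj)]; ring, zero_add]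
    refine Finset.sum_congr rfl fun j hj => ?_
    rw [hdec, Matrix.mulVec_add, Pi.add_apply, hc1 j ((hTc j).1 hj), zero_add]
  have hN : ∑ j, (C *ᵥ δ) j ^ 2 = ∑ i, δ i ^ 2 := by
    rw [← dot_self_aux δ, ← parseval_aux C hC, dot_self_aux]
  have hN2pos : 0 < ∑ i, δ2 i ^ 2 := by
    have : 0 ≤ ∑ j, δ2 j ^ 2 := Finset.sum_nonneg fun j _ => sq_nonneg _
    refine lt_of_le_of_ne this fun h => hδ2ne ?_
    rw [← dot_self_aux] at h
    exact dotProduct_self_eq_zero.1 h.symm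
  -- the tail of `Uᵀβ`
  set y := Uᵀ *ᵥ β with hy
  have hUy : U *ᵥ y = β := by rw [hy, Matrix.mulVec_mulVec, hUU, Matrix.one_mulVec]
  let G : Finset (Fin p) := Finset.univ.filter fun j => k < j.1
  let z : Fin p → ℝ := fun i => if i ∈ G then y i else 0
  set Z := ∑ i ∈ G, y i ^ 2 with hZ
  have hZ0 : 0 ≤ Z := Finset.sum_nonneg fun j _ => sq_nonneg _
  have hzz : ∑ i, z i ^ 2 = Z := by
    simp [z, hZ, ite_pow, Finset.sum_ite_mem]
  have hzy : z ⬝ᵥ y = Z := by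
    simp [z, hZ, dotProduct, ite_mul, Finset.sum_ite_mem, sq]
  have hVC : ∑ j, (C *ᵥ (U *ᵥ z)) j ^ 2 = Z := by
    rw [← dot_self_aux, parseval_aux C hC, parseval_aux U hU, dot_self_aux, hzz]
  have hBC : ∑ j, (C *ᵥ β) j ^ 2 = ∑ i, y i ^ 2 := by
    rw [← dot_self_aux, parseval_aux C hC, ← hUy, parseval_aux U hU, dot_self_aux]
  have hVB : ∑ j, (C *ᵥ (U *ᵥ z)) j * (C *ᵥ β) j = Z := by
    have : (C *ᵥ (U *ᵥ z)) ⬝ᵥ (C *ᵥ β) = Z := by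
      rw [parseval_aux C hC, ← hUy, parseval_aux U hU, hzy]
    exact this
  have hray : ∑ j, lam j * (C *ᵥ (U *ᵥ z)) j ^ 2 +
      ρ * (∑ j, (C *ᵥ δ) j * (C *ᵥ (U *ᵥ z)) j) ^ 2 ≤
      (L + ε) * ∑ j, (C *ᵥ (U *ᵥ z)) j ^ 2 := by
    have e : ∑ j, (C *ᵥ δ) j * (C *ᵥ (U *ᵥ z)) j = δ ⬝ᵥ (U *ᵥ z) := parseval_aux C hC _ _
    rw [e, ← hRC, hRU, hVC, ← hzz, Finset.mul_sum]
    refine Finset.sum_le_sum fun j _ => ?_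
    by_cases hj : j ∈ G
    · exact mul_le_mul_of_nonneg_right (hη j (by simpa [G] using hj)) (sq_nonneg _)
    · simp [z, hj]
  have hcore := core_aux T lam (C *ᵥ (U *ᵥ z)) (C *ᵥ δ) (C *ᵥ β) L d ε ρ dt hL hd hε hρ
    (fun j hj => by
      have h1 := hdesc j ⟨k - 1, by omega⟩ (by
        have := (hT j).1 hj
        rw [Fin.le_def]; simp only; omega)
      have h2 := hdesc ⟨k, hkp⟩ ⟨p - 1, by omega⟩ (by rw [Fin.le_def]; simp only; omega)
      rw [← hLd] at h2
      linarith)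
    (fun j => hdesc j ⟨p - 1, by omega⟩ (by
      have := j.2
      rw [Fin.le_def]; simp only; omega))
    (fun j hj => by
      have h1 := hdesc ⟨k, hkp⟩ j ((hTc j).1 hj)
      linarith)
    (fun j => by rw [← hCS, hSβ]) (by rw [hN2]; exact hN2pos) (by rw [hN2, hN]; exact hdt) hray
  rw [hVB, hVC, hBC] at hcore
  set Y := ∑ i, y i ^ 2 with hY
  have hY0 : 0 ≤ Y := Finset.sum_nonneg fun j _ => sq_nonneg _
  set K := (L + ε) / L * (ε / L + Real.sqrt (ε / (dt - 2 * ε))) with hK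
  have hK0 : 0 ≤ K := by positivity
  have hKle : (L + ε) / L * Real.sqrt (ε / dt) + ε / L ≤ K := by
    have h1 : Real.sqrt (ε / dt) ≤ Real.sqrt (ε / (dt - 2 * ε)) := by
      apply Real.sqrt_le_sqrt
      apply div_le_div_of_nonneg_left hε.le (by linarith) (by linarith)
    have h2 : 1 ≤ (L + ε) / L := by rw [one_le_div hL]; linarith
    have h3 : 0 ≤ ε / L := by positivity
    have h4 := mul_le_mul_of_nonneg_left h1 (zero_le_one.trans h2)
    have h5 := mul_le_mul_of_nonneg_right h2 h3
    rw [hK, mul_add]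
    linarith
  have hZK : Real.sqrt Z ≤ K * Real.sqrt Y := by
    rcases (Real.sqrt_nonneg Z).eq_or_lt with h | h
    · rw [← h]; positivity
    · have h1 : Real.sqrt Z * Real.sqrt Z ≤ (K * Real.sqrt Y) * Real.sqrt Z := by
        rw [Real.mul_self_sqrt hZ0]
        refine hcore.trans ((mul_le_mul_of_nonneg_right hKle (by positivity)).trans_eq ?_)
        ring
      exact le_of_mul_le_mul_right h1 h
  -- l1 versus l2
  have hl1 : ∀ s : Finset (Fin p), ∑ i ∈ s, |y i| ≤ Real.sqrt (s.card) *
      Real.sqrt (∑ i ∈ s, y i ^ 2) := by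
    intro s
    have := Real.sum_mul_le_sqrt_mul_sqrt s (fun _ => (1 : ℝ)) (fun i => |y i|)
    simpa [sq_abs] using this
  have hGcard : G.card = p - k - 1 := by
    have : G = Finset.Ioi ⟨k, hkp⟩ := by
      ext j; simp [G, Fin.lt_def]
    rw [this, Fin.card_Ioi]
    simp only
    omega
  have hGccard : (Gᶜ).card = k + 1 := by
    rw [Finset.card_compl, hGcard, Fintype.card_fin]
    omega
  have hsum : ∑ i, |y i| ≤ Real.sqrt (k + 1) * Real.sqrt Y +
      Real.sqrt ((p - k - 1 : ℕ)) * Real.sqrt Z := by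
    rw [← Finset.sum_add_sum_compl G (fun i => |y i|), add_comm]
    refine add_le_add ((hl1 Gᶜ).trans ?_) ((hl1 G).trans ?_)
    · rw [hGccard]
      push_cast
      refine mul_le_mul_of_nonneg_left (Real.sqrt_le_sqrt ?_) (Real.sqrt_nonneg _)
      have := Finset.sum_add_sum_compl G (fun i => y i ^ 2)
      rw [hY, ← this]
      linarith
    · rw [hGcard]
  apply div_le_of_le_mul₀ (Real.sqrt_nonneg _) (by positivity)
  refine hsum.trans ?_
  have := mul_le_mul_of_nonneg_left hZK (Real.sqrt_nonneg ((p - k - 1 : ℕ) : ℝ))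
  rw [hK] at this
  nlinarith
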